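/- For every complex 2×2 Jones matrix J, every entry of the 4×4 matrix ξ(J) = A (J ⊗ J*) A⁻¹ is a real number. -/

import Mathlib

open Matrix Complex
open scoped Kronecker Matrix

/-- The matrix `A` relating the Kronecker-product picture to the Mueller picture. -/
noncomputable def muellerA : Matrix (Fin 4) (Fin 4) ℂ :=
  !![1, 0, 0, 1;
     1, 0, 0, -1;
     0, 1, 1, 0;
     0, Complex.I, -Complex.I, 0]

/-- The Mueller matrix `ξ(J) = A (J ⊗ J*) A⁻¹` of a Jones matrix `J`. -/
noncomputable def mueller (J : Matrix (Fin 2) (Fin 2) ℂ) : Matrix (Fin 4) (Fin 4) ℂ :=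
  muellerA * (Matrix.reindex finProdFinEquiv finProdFinEquiv (J ⊗ₖ J.map star)) * muellerA⁻¹


theorem muellerA_inv : muellerA⁻¹ = (1/2 : ℂ) • muellerAᴴ := by
  apply Matrix.inv_eq_right_inv
  ext i j
  fin_cases i <;> fin_cases j <;>
    simp [muellerA, Matrix.mul_apply, Fin.sum_univ_four] <;> norm_num
  linear_combination -Complex.I_mul_I

theorem kron_reindex (J : Matrix (Fin 2) (Fin 2) ℂ) :
    Matrix.reindex finProdFinEquiv finProdFinEquiv (J ⊗ₖ J.map star) =
    (!![J 0 0 * star (J 0 0), J 0 0 * star (J 0 1), J 0 1 * star (J 0 0), J 0 1 * star (J 0 1);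
       J 0 0 * star (J 1 0), J 0 0 * star (J 1 1), J 0 1 * star (J 1 0), J 0 1 * star (J 1 1);
       J 1 0 * star (J 0 0), J 1 0 * star (J 0 1), J 1 1 * star (J 0 0), J 1 1 * star (J 0 1);
       J 1 0 * star (J 1 0), J 1 0 * star (J 1 1), J 1 1 * star (J 1 0), J 1 1 * star (J 1 1)] :
      Matrix (Fin 4) (Fin 4) ℂ) := by
  ext i j
  fin_cases i <;> fin_cases j <;> rfl

/-- every entry of the Mueller matrix `ξ(J)` of a Jones matrix `J`
is a real number. -/
theorem mueller_entries_real (J : Matrix (Fin 2) (Fin 2) ℂ) (n m : Fin 4) :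
    (mueller J n m).im = 0 := by
  unfold mueller
  rw [muellerA_inv, kron_reindex]
  fin_cases n <;> fin_cases m <;>
    simp [muellerA, Matrix.mul_apply, Fin.sum_univ_four] <;> ring
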